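/- arXiv:1912.07194 — 2 statements merged into one kernel-verified Lean document; each statement's English description precedes it below -/
import Mathlib

section
/- Let n ≥ 2 and let f: ℂ^{n×n} → ℝ be differentiable (with respect to the real and imaginary parts of the entries) and invariant under right multiplication by diagonal unitary matrices, i.e. f(UD) = f(U) for all U ∈ U(n) and all diagonal D ∈ U(n). Then for every U ∈ U(n) there exists a pair 1 ≤ i < j ≤ n such that ‖ProjGrad h^{ij}_U(I₂)‖ ≥ (√2/n) ‖ProjGrad f(U)‖, where ProjGrad h^{ij}_U(I₂) denotes the Riemannian gradient on U(2) of the map Ψ ↦ f(U G(i,j,Ψ)) at the identity I₂. -/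
open Matrix BigOperators Filter

/-- Frobenius norm of a square complex matrix (any size). -/
noncomputable def frobC {m : ℕ} (A : Matrix (Fin m) (Fin m) ℂ) : ℝ :=
  Real.sqrt (∑ i, ∑ j, Complex.normSq (A i j))

/-- `g` is the Euclidean gradient of `f : ℂ^{n×n} → ℝ` with respect to the real
inner product `⟨A,B⟩ = Re tr(Aᴴ B)`. -/
def IsGradC {n : ℕ} (f : Matrix (Fin n) (Fin n) ℂ → ℝ)
    (g : Matrix (Fin n) (Fin n) ℂ → Matrix (Fin n) (Fin n) ℂ) : Prop :=
  ∀ U H, HasDerivAt (fun t : ℝ => f (U + t • H))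
    (∑ i, ∑ j, ((starRingEnd ℂ) (g U i j) * H i j).re) 0

/-- Riemannian (projected) gradient on U(n): `U (Λ - Λᴴ)/2` with `Λ = Uᴴ ∇f(U)`. -/
noncomputable def projGradC {n : ℕ}
    (g : Matrix (Fin n) (Fin n) ℂ → Matrix (Fin n) (Fin n) ℂ)
    (U : Matrix (Fin n) (Fin n) ℂ) : Matrix (Fin n) (Fin n) ℂ :=
  U * ((1 / 2 : ℂ) • (Uᴴ * g U - (Uᴴ * g U)ᴴ))

/-- Plane transformation `G(i,j,Ψ)`: identity except that the 2×2 submatrix formed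
by rows and columns `(i,j)` equals `Ψ`. -/
noncomputable def planeG (n : ℕ) (i j : Fin n) (Ψ : Matrix (Fin 2) (Fin 2) ℂ) :
    Matrix (Fin n) (Fin n) ℂ :=
  fun a b =>
    if a = i ∧ b = i then Ψ 0 0
    else if a = i ∧ b = j then Ψ 0 1
    else if a = j ∧ b = i then Ψ 1 0
    else if a = j ∧ b = j then Ψ 1 1
    else if a = b then 1 else 0

lemma trace_sum_aux {n : ℕ} (A H : Matrix (Fin n) (Fin n) ℂ) :
    ∑ i, ∑ j, ((starRingEnd ℂ) (A i j) * H i j).re = (Matrix.trace (Aᴴ * H)).re := by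
  rw [Finset.sum_comm]
  simp [Matrix.trace, Matrix.mul_apply]

lemma move_sum_aux {n : ℕ} (g U E : Matrix (Fin n) (Fin n) ℂ) :
    ∑ i, ∑ j, ((starRingEnd ℂ) (g i j) * (U * E) i j).re =
      ∑ i, ∑ j, ((starRingEnd ℂ) ((Uᴴ * g) i j) * E i j).re := by
  rw [trace_sum_aux, trace_sum_aux, conjTranspose_mul, conjTranspose_conjTranspose,
    Matrix.mul_assoc]

lemma frobC_eq_aux {n : ℕ} (A : Matrix (Fin n) (Fin n) ℂ) :
    frobC A = Real.sqrt (Matrix.trace (Aᴴ * A)).re := by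
  rw [← trace_sum_aux, frobC]
  congr 1
  refine Finset.sum_congr rfl fun i _ => Finset.sum_congr rfl fun j _ => ?_
  simp [Complex.normSq_apply]

lemma frobC_unitary_aux {n : ℕ} (U A : Matrix (Fin n) (Fin n) ℂ) (hU : Uᴴ * U = 1) :
    frobC (U * A) = frobC A := by
  rw [frobC_eq_aux, frobC_eq_aux, conjTranspose_mul, Matrix.mul_assoc, ← Matrix.mul_assoc Uᴴ,
    hU, Matrix.one_mul]

/-- Embedding of a 2×2 matrix in rows and columns `i, j`. -/
noncomputable def embAux {n : ℕ} (i j : Fin n) (H : Matrix (Fin 2) (Fin 2) ℂ) :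
    Matrix (Fin n) (Fin n) ℂ :=
  Matrix.single i i (H 0 0) + Matrix.single i j (H 0 1) + Matrix.single j i (H 1 0)
    + Matrix.single j j (H 1 1)

lemma planeG_aux {n : ℕ} (i j : Fin n) (hij : i ≠ j) (H : Matrix (Fin 2) (Fin 2) ℂ) (t : ℝ) :
    planeG n i j (1 + t • H) = 1 + t • embAux i j H := by
  ext a b
  simp only [planeG, embAux, Matrix.add_apply, Matrix.smul_apply, Matrix.single_apply,
    Matrix.one_apply]
  by_cases h1 : a = i
  · subst h1
    by_cases h3 : b = a
    · subst h3
      simp [hij, hij.symm]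
    · by_cases h4 : b = j
      · subst h4
        simp [hij, hij.symm]
      · simp [hij, hij.symm, h3, h4, Ne.symm h3, Ne.symm h4]
  · by_cases h2 : a = j
    · subst h2
      by_cases h3 : b = i
      · subst h3
        simp [hij, hij.symm]
      · by_cases h4 : b = a
        · subst h4
          simp [hij, hij.symm]
        · simp [hij, hij.symm, h3, h4, Ne.symm h3, Ne.symm h4]
    · simp [h1, h2, Ne.symm h1, Ne.symm h2]

lemma sum_single_aux {n : ℕ} (L : Matrix (Fin n) (Fin n) ℂ) (i j : Fin n) (c : ℂ) :
    ∑ a, ∑ b, ((starRingEnd ℂ) (L a b) * Matrix.single i j c a b).re =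
      ((starRingEnd ℂ) (L i j) * c).re := by
  rw [Finset.sum_eq_single i, Finset.sum_eq_single j]
  · simp
  · intro b _ hb
    simp [Matrix.single_apply, hb.symm]
  · simp
  · intro b _ hb
    simp [Matrix.single_apply, hb.symm]
  · simp

lemma sum_emb_aux {n : ℕ} (L : Matrix (Fin n) (Fin n) ℂ) (i j : Fin n)
    (H : Matrix (Fin 2) (Fin 2) ℂ) :
    ∑ a, ∑ b, ((starRingEnd ℂ) (L a b) * embAux i j H a b).re =
      ∑ a, ∑ b, ((starRingEnd ℂ) (L.submatrix ![i, j] ![i, j] a b) * H a b).re := by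
  simp only [embAux, Matrix.add_apply, mul_add, Complex.add_re, Finset.sum_add_distrib,
    sum_single_aux]
  simp only [Fin.sum_univ_two, submatrix_apply, Matrix.cons_val_zero, Matrix.cons_val_one]
  ring

lemma diag_im_aux {n : ℕ} (f : Matrix (Fin n) (Fin n) ℂ → ℝ)
    (g : Matrix (Fin n) (Fin n) ℂ → Matrix (Fin n) (Fin n) ℂ)
    (hdiff : Differentiable ℝ (fun x : Fin n → Fin n → ℂ => f (Matrix.of x)))
    (hg : IsGradC f g)
    (hinv : ∀ U D : Matrix (Fin n) (Fin n) ℂ, Uᴴ * U = 1 → Dᴴ * D = 1 → D.IsDiag →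
      f (U * D) = f U)
    (U : Matrix (Fin n) (Fin n) ℂ) (hU : Uᴴ * U = 1) (k : Fin n) :
    ((Uᴴ * g U) k k).im = 0 := by
  set K : Matrix (Fin n) (Fin n) ℂ := U * Matrix.single k k Complex.I with hK
  set V : Matrix (Fin n) (Fin n) ℂ := U * Matrix.single k k (1 : ℂ) with hV
  let F : (Fin n → Fin n → ℂ) → ℝ := fun x => f (Matrix.of x)
  have hF : HasFDerivAt F (fderiv ℝ F U) U := (hdiff U).hasFDerivAt
  -- straight line
  have h1 : HasDerivAt (fun t : ℝ => F (fun a b => U a b + (t : ℂ) * K a b))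
      (fderiv ℝ F U K) 0 := by
    have hc : HasDerivAt (fun t : ℝ => (fun a b => U a b + (t : ℂ) * K a b : Fin n → Fin n → ℂ))
        (K : Fin n → Fin n → ℂ) 0 := by
      refine hasDerivAt_pi.2 fun a => hasDerivAt_pi.2 fun b => ?_
      have := ((Complex.ofRealCLM.hasDerivAt (x := (0 : ℝ))).mul_const (K a b)).const_add (U a b)
      simpa using this
    refine HasFDerivAt.comp_hasDerivAt (0 : ℝ) ?_ hc
    have e0 : (fun a b => U a b + ((0 : ℝ) : ℂ) * K a b) = U := by
      ext a b
      simp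
    rw [e0]
    exact hF
  have h2 : HasDerivAt (fun t : ℝ => F (fun a b => U a b + (Complex.exp (t * Complex.I) - 1) *
      V a b)) (fderiv ℝ F U K) 0 := by
    have hc : HasDerivAt (fun t : ℝ => (fun a b => U a b + (Complex.exp (t * Complex.I) - 1) *
      V a b : Fin n → Fin n → ℂ))
        (K : Fin n → Fin n → ℂ) 0 := by
      refine hasDerivAt_pi.2 fun a => hasDerivAt_pi.2 fun b => ?_
      have := (((((Complex.ofRealCLM.hasDerivAt (x := (0 : ℝ))).mul_const Complex.I).cexp).sub_const
        1).mul_const (V a b)).const_add (U a b)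
      have e : K a b = Complex.I * V a b := by
        have : Matrix.single k k Complex.I = Complex.I • Matrix.single k k (1:ℂ) := by simp
        rw [hK, this, Matrix.mul_smul, Matrix.smul_apply, smul_eq_mul, ← hV]
      rw [e]
      simpa using this
    refine HasFDerivAt.comp_hasDerivAt (0 : ℝ) ?_ hc
    have e0 : (fun a b => U a b + (Complex.exp (((0 : ℝ) : ℂ) * Complex.I) - 1) * V a b) = U := by
      ext a b
      simp
    rw [e0]
    exact hF
  have h3 := hg U K
  have e1 : fderiv ℝ F U K = ∑ i, ∑ j, ((starRingEnd ℂ) (g U i j) * K i j).re := by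
    refine h1.unique ?_
    have e0 : (fun t : ℝ => F (fun a b => U a b + (t : ℂ) * K a b)) =
        fun t : ℝ => f (U + t • K) := by
      funext t
      show f (Matrix.of _) = _
      congr 1
    rw [e0]
    exact h3
  have e2 : fderiv ℝ F U K = 0 := by
    refine h2.unique ?_
    have : (fun t : ℝ => F (fun a b => U a b + (Complex.exp (t * Complex.I) - 1) *
      V a b)) = fun _ => f U := by
      funext t
      set z := Complex.exp (t * Complex.I) with hz
      have hz1 : (starRingEnd ℂ) z * z = 1 := by
        rw [mul_comm, Complex.mul_conj, Complex.normSq_eq_norm_sq, hz,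
          Complex.norm_exp_ofReal_mul_I]
        simp
      have hd : (fun a b => U a b + (z - 1) * V a b) =
          U * Matrix.diagonal (fun l => if l = k then z else 1) := by
        have : Matrix.diagonal (fun l => if l = k then z else 1) =
          1 + (z - 1) • Matrix.single k k (1:ℂ) := by
          ext a b
          by_cases hab : a = b
          · subst hab
            by_cases hak : a = k
            · subst hak; simp
            · simp [hak, Matrix.single_apply, Ne.symm hak]
          · simp only [Matrix.diagonal_apply, hab, Matrix.add_apply, Matrix.one_apply,
              Matrix.smul_apply, Matrix.single_apply]
            have : ¬ (k = a ∧ k = b) := fun h => hab (h.1.symm.trans h.2)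
            simp [this]
        rw [this, Matrix.mul_add, Matrix.mul_one, Matrix.mul_smul]
        rfl
      show f (Matrix.of _) = _
      rw [hd]
      refine hinv U _ hU ?_ (Matrix.isDiag_diagonal _)
      rw [Matrix.diagonal_conjTranspose, Matrix.diagonal_mul_diagonal, ← Matrix.diagonal_one]
      congr 1
      funext l
      by_cases hl : l = k
      · simpa [hl] using hz1
      · simp [hl]
    rw [this]
    exact hasDerivAt_const _ _
  rw [e1, hK, move_sum_aux, sum_single_aux] at e2
  simpa using e2

/-- For `n ≥ 2`, `f : ℂ^{n×n} → ℝ` differentiable (in the real and imaginary parts)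
and invariant under right multiplication by diagonal unitary matrices, and any
unitary `U`, there is a pair `i < j` such that the Riemannian gradient at `I₂` of
`Ψ ↦ f(U G(i,j,Ψ))` has norm at least `(√2/n) ‖ProjGrad f(U)‖`. The Euclidean
gradient `gh` of this restricted map at `I₂` is characterized by directional
derivatives, and its Riemannian gradient at `I₂` is `(gh - ghᴴ)/2`. -/
theorem exists_pair_gradient_aligned_unitary {n : ℕ} (hn : 2 ≤ n)
    (f : Matrix (Fin n) (Fin n) ℂ → ℝ)
    (g : Matrix (Fin n) (Fin n) ℂ → Matrix (Fin n) (Fin n) ℂ)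
    (hdiff : Differentiable ℝ (fun x : Fin n → Fin n → ℂ => f (Matrix.of x)))
    (hg : IsGradC f g)
    (hinv : ∀ U D : Matrix (Fin n) (Fin n) ℂ, Uᴴ * U = 1 → Dᴴ * D = 1 → D.IsDiag →
      f (U * D) = f U)
    (U : Matrix (Fin n) (Fin n) ℂ) (hU : Uᴴ * U = 1) :
    ∃ i j : Fin n, i < j ∧ ∃ gh : Matrix (Fin 2) (Fin 2) ℂ,
      (∀ H : Matrix (Fin 2) (Fin 2) ℂ,
        HasDerivAt (fun t : ℝ => f (U * planeG n i j (1 + t • H)))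
          (∑ a, ∑ b, ((starRingEnd ℂ) (gh a b) * H a b).re) 0) ∧
      Real.sqrt 2 / (n : ℝ) * frobC (projGradC g U) ≤
        frobC ((1 / 2 : ℂ) • (gh - ghᴴ)) := by
  set L := Uᴴ * g U with hL
  set A : Matrix (Fin n) (Fin n) ℂ := (1 / 2 : ℂ) • (L - Lᴴ) with hA
  have hdiag : ∀ k, A k k = 0 := by
    intro k
    have := diag_im_aux f g hdiff hg hinv U hU k
    rw [← hL] at this
    have h2 : (starRingEnd ℂ) (L k k) = L k k := Complex.conj_eq_iff_im.2 this
    simp [hA, h2]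
  have hskew : ∀ a b, Complex.normSq (A a b) = Complex.normSq (A b a) := by
    intro a b
    have : A a b = - (starRingEnd ℂ) (A b a) := by
      have h2 : (starRingEnd ℂ) 2 = 2 := Complex.conj_ofNat 2
      simp [hA, h2]
      ring
    rw [this, Complex.normSq_neg, Complex.normSq_conj]
  -- a maximal entry
  have key : ∃ i j : Fin n, i < j ∧ ∀ a b, Complex.normSq (A a b) ≤ Complex.normSq (A i j) := by
    have : Nonempty (Fin n) := ⟨⟨0, by omega⟩⟩
    obtain ⟨⟨i, j⟩, h⟩ := Finite.exists_max (fun p : Fin n × Fin n => Complex.normSq (A p.1 p.2))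
    have h' : ∀ a b, Complex.normSq (A a b) ≤ Complex.normSq (A i j) := fun a b => h (a, b)
    rcases lt_trichotomy i j with hlt | heq | hgt
    · exact ⟨i, j, hlt, h'⟩
    · refine ⟨⟨0, by omega⟩, ⟨1, by omega⟩, by simp, fun a b => (h' a b).trans ?_⟩
      rw [heq, hdiag, Complex.normSq_zero]
      exact Complex.normSq_nonneg _
    · exact ⟨j, i, hgt, fun a b => (h' a b).trans (hskew i j).le⟩
  obtain ⟨i, j, hij, hmax⟩ := key
  refine ⟨i, j, hij, L.submatrix ![i, j] ![i, j], ?_, ?_⟩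
  · intro H
    have h := hg U (U * embAux i j H)
    rw [move_sum_aux, sum_emb_aux] at h
    convert h using 1
    funext t
    rw [planeG_aux i j hij.ne, Matrix.mul_add, Matrix.mul_one, Matrix.mul_smul]
  · have hP : frobC (projGradC g U) = frobC A := by
      rw [projGradC, frobC_unitary_aux _ _ hU]
    have hS : (1 / 2 : ℂ) • (L.submatrix ![i, j] ![i, j] - (L.submatrix ![i, j] ![i, j])ᴴ) =
        A.submatrix ![i, j] ![i, j] := by
      rfl
    have hR : frobC (A.submatrix ![i, j] ![i, j]) = Real.sqrt (2 * Complex.normSq (A i j)) := by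
      rw [frobC]
      congr 1
      simp [Fin.sum_univ_two, hdiag, hskew j i]
      ring
    rw [hP, hS, hR]
    have hn0 : (0 : ℝ) < n := by
      have : 0 < n := by omega
      exact_mod_cast this
    have hb : frobC A ≤ n * Real.sqrt (Complex.normSq (A i j)) := by
      rw [frobC]
      apply Real.sqrt_le_iff.2
      refine ⟨by positivity, ?_⟩
      rw [mul_pow, Real.sq_sqrt (Complex.normSq_nonneg _)]
      calc ∑ a, ∑ b, Complex.normSq (A a b)
          ≤ ∑ _a : Fin n, ∑ _b : Fin n, Complex.normSq (A i j) :=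
            Finset.sum_le_sum fun a _ => Finset.sum_le_sum fun b _ => hmax a b
        _ = (n : ℝ) ^ 2 * Complex.normSq (A i j) := by
            simp
            ring
    rw [Real.sqrt_mul (by norm_num)]
    calc Real.sqrt 2 / n * frobC A
        ≤ Real.sqrt 2 / n * (n * Real.sqrt (Complex.normSq (A i j))) := by gcongr
      _ = Real.sqrt 2 * Real.sqrt (Complex.normSq (A i j)) := by field_simp
end

section
/- Let f be the cost function f(U) = Σ_{ℓ=1}^L α_ℓ Σ_{k=1}^n |W^(ℓ)(U)_{k⋯k}|², where for each ℓ, W^(ℓ)(U)_{k₁⋯k_{d_ℓ}} = Σ_{a₁,…,a_{d_ℓ}} A^(ℓ)_{a₁⋯a_{d_ℓ}} ∏_{p=1}^{t_ℓ} conj(U_{a_p k_p}) ∏_{p=t_ℓ+1}^{d_ℓ} U_{a_p k_p}. Let {U_k} be a Jacobi-G sequence for f on U(n). Then every accumulation point U* of {U_k} is a stationary point of f restricted to U(n), i.e. ProjGrad f(U*) = 0. -/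
open Matrix BigOperators Filter

/-- The 2×2 unitary matrix `Ψ(c,s₁,s₂) = [[c, −(s₁+is₂)], [s₁−is₂, c]]`. -/
noncomputable def PsiM (c s₁ s₂ : ℝ) : Matrix (Fin 2) (Fin 2) ℂ :=
  !![(c : ℂ), -((s₁ : ℂ) + (s₂ : ℂ) * Complex.I);
     (s₁ : ℂ) - (s₂ : ℂ) * Complex.I, (c : ℂ)]

/-- derivative of `planeG` -/
noncomputable def planeE (n : ℕ) (i j : Fin n) (H : Matrix (Fin 2) (Fin 2) ℂ) :
    Matrix (Fin n) (Fin n) ℂ :=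
  fun a b =>
    if a = i ∧ b = i then H 0 0
    else if a = i ∧ b = j then H 0 1
    else if a = j ∧ b = i then H 1 0
    else if a = j ∧ b = j then H 1 1
    else 0

/-- directional derivative of `Ψ ↦ f (U * G(i,j,Ψ))` at the identity -/
noncomputable def dirD {n : ℕ} (f : (Fin n → Fin n → ℂ) → ℝ) (i j : Fin n)
    (H : Matrix (Fin 2) (Fin 2) ℂ) (U : Fin n → Fin n → ℂ) : ℝ :=
  fderiv ℝ f U (fun a b => ∑ c, U a c * planeE n i j H c b)

/-- gradient of `Ψ ↦ f (U * G(i,j,Ψ))` at the identity -/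
noncomputable def gradH {n : ℕ} (f : (Fin n → Fin n → ℂ) → ℝ) (i j : Fin n)
    (U : Fin n → Fin n → ℂ) : Matrix (Fin 2) (Fin 2) ℂ :=
  fun a b => (dirD f i j (Matrix.single a b 1) U : ℂ)
    + (dirD f i j (Matrix.single a b Complex.I) U : ℂ) * Complex.I

lemma planeG_one {n : ℕ} (i j : Fin n) (hij : i ≠ j) : planeG n i j 1 = 1 := by
  ext a b
  simp only [planeG, Matrix.one_apply]
  split_ifs <;> simp_all
  all_goals grind

lemma contDiff_cost {n L : ℕ}
    (d t : Fin L → ℕ) (α : Fin L → ℝ)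
    (A : (ℓ : Fin L) → ((Fin (d ℓ) → Fin n) → ℂ))
    (f : (Fin n → Fin n → ℂ) → ℝ)
    (hf : ∀ U : (Fin n → Fin n → ℂ), f U =
      ∑ ℓ, α ℓ * ∑ k : Fin n, Complex.normSq
        (∑ a : Fin (d ℓ) → Fin n, A ℓ a *
          ∏ p : Fin (d ℓ), (if (p : ℕ) < t ℓ then (starRingEnd ℂ) (U (a p) k)
            else U (a p) k))) : ContDiff ℝ 1 f := by
  have : f = _ := funext hf
  rw [this]
  have hent : ∀ a b, ContDiff ℝ 1 (fun U : Fin n → Fin n → ℂ => U a b) := by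
    intro a b; fun_prop
  refine ContDiff.sum fun ℓ _ => contDiff_const.mul (ContDiff.sum fun k _ => ?_)
  simp only [Complex.normSq_eq_norm_sq]
  refine ContDiff.norm_sq ℝ ?_
  refine ContDiff.sum fun a _ => contDiff_const.mul (contDiff_prod fun p _ => ?_)
  split_ifs
  · exact Complex.conjCLE.contDiff.comp (hent _ _)
  · exact hent _ _

lemma hasDerivAt_plane {n : ℕ} (f : (Fin n → Fin n → ℂ) → ℝ) (hf : ContDiff ℝ 1 f)
    (i j : Fin n) (hij : i ≠ j) (U : Matrix (Fin n) (Fin n) ℂ)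
    (M : ℝ → Matrix (Fin 2) (Fin 2) ℂ) (H : Matrix (Fin 2) (Fin 2) ℂ)
    (h0 : M 0 = 1) (hM : ∀ a b, HasDerivAt (fun τ => M τ a b) (H a b) 0) :
    HasDerivAt (fun τ : ℝ => f (U * planeG n i j (M τ) : Matrix (Fin n) (Fin n) ℂ)) (dirD f i j H U) 0 := by
  have hγ : HasDerivAt (fun τ : ℝ => (fun a b => ∑ c, U a c * planeG n i j (M τ) c b :
      Fin n → Fin n → ℂ)) (fun a b => ∑ c, U a c * planeE n i j H c b) 0 := by
    rw [hasDerivAt_pi]; intro a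
    rw [hasDerivAt_pi]; intro b
    refine HasDerivAt.fun_sum fun c _ => HasDerivAt.const_mul _ ?_
    simp only [planeG, planeE]
    split_ifs
    all_goals first | exact hM _ _ | exact hasDerivAt_const _ _
  have hb : (fun a b => ∑ c, U a c * planeG n i j (M 0) c b : Fin n → Fin n → ℂ) = U := by
    rw [h0, planeG_one i j hij]
    ext a b
    rw [← Matrix.mul_apply, Matrix.mul_one]
  have hfd : HasFDerivAt f (fderiv ℝ f U)
      (fun a b => ∑ c, U a c * planeG n i j (M 0) c b : Fin n → Fin n → ℂ) := by
    rw [hb]; exact (hf.differentiable (by norm_num) _).hasFDerivAt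
  have := hfd.comp_hasDerivAt (0 : ℝ) hγ
  exact this

lemma cost_phase {n L : ℕ}
    (d t : Fin L → ℕ) (α : Fin L → ℝ)
    (A : (ℓ : Fin L) → ((Fin (d ℓ) → Fin n) → ℂ))
    (f : (Fin n → Fin n → ℂ) → ℝ)
    (hf : ∀ U : (Fin n → Fin n → ℂ), f U =
      ∑ ℓ, α ℓ * ∑ k : Fin n, Complex.normSq
        (∑ a : Fin (d ℓ) → Fin n, A ℓ a *
          ∏ p : Fin (d ℓ), (if (p : ℕ) < t ℓ then (starRingEnd ℂ) (U (a p) k)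
            else U (a p) k))) (U : Fin n → Fin n → ℂ) (w : Fin n → ℂ)
    (hw : ∀ b, Complex.normSq (w b) = 1) : f (fun a b => U a b * w b) = f U := by
  rw [hf, hf]
  refine Finset.sum_congr rfl fun ℓ _ => ?_
  congr 1
  refine Finset.sum_congr rfl fun k _ => ?_
  have : (∑ a : Fin (d ℓ) → Fin n, A ℓ a *
          ∏ p : Fin (d ℓ), (if (p : ℕ) < t ℓ then (starRingEnd ℂ) (U (a p) k * w k)
            else U (a p) k * w k)) =
      (∑ a : Fin (d ℓ) → Fin n, A ℓ a *
          ∏ p : Fin (d ℓ), (if (p : ℕ) < t ℓ then (starRingEnd ℂ) (U (a p) k)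
            else U (a p) k)) *
        ∏ p : Fin (d ℓ), (if (p : ℕ) < t ℓ then (starRingEnd ℂ) (w k) else w k) := by
    rw [Finset.sum_mul]
    refine Finset.sum_congr rfl fun a _ => ?_
    rw [mul_assoc, ← Finset.prod_mul_distrib]
    congr 1
    refine Finset.prod_congr rfl fun p _ => ?_
    split_ifs <;> simp
  rw [this, Complex.normSq_mul, map_prod]
  rw [Finset.prod_eq_one, mul_one]
  intro p _
  split_ifs
  · rw [Complex.normSq_conj, hw]
  · exact hw k

lemma mul_planeG_diag {n : ℕ} (i j : Fin n) (hij : i ≠ j) (U : Matrix (Fin n) (Fin n) ℂ)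
    (z w : ℂ) : U * planeG n i j !![z, 0; 0, w] =
      Matrix.of fun a b => U a b * (if b = i then z else if b = j then w else 1) := by
  have : planeG n i j !![z, 0; 0, w] =
      Matrix.diagonal (fun b => if b = i then z else if b = j then w else 1) := by
    ext a b
    simp only [planeG, Matrix.diagonal_apply]
    split_ifs <;> simp_all
    all_goals grind
  rw [this]
  ext a b
  rw [Matrix.mul_diagonal, Matrix.of_apply]

lemma continuous_dirD {n : ℕ} (f : (Fin n → Fin n → ℂ) → ℝ) (hf : ContDiff ℝ 1 f)
    (i j : Fin n) (H : Matrix (Fin 2) (Fin 2) ℂ) : Continuous (dirD f i j H) := by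
  unfold dirD
  refine (hf.continuous_fderiv (by norm_num)).clm_apply ?_
  fun_prop

lemma continuous_gradH {n : ℕ} (f : (Fin n → Fin n → ℂ) → ℝ) (hf : ContDiff ℝ 1 f)
    (i j : Fin n) : Continuous (gradH f i j) := by
  refine continuous_pi fun a => continuous_pi fun b => ?_
  have h1 := continuous_dirD f hf i j (Matrix.single a b 1)
  have h2 := continuous_dirD f hf i j (Matrix.single a b Complex.I)
  unfold gradH
  fun_prop

lemma continuous_frobC {m : ℕ} : Continuous (frobC : Matrix (Fin m) (Fin m) ℂ → ℝ) := by
  unfold frobC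
  refine Real.continuous_sqrt.comp ?_
  refine continuous_finsetSum _ fun a _ => continuous_finsetSum _ fun b _ => ?_
  exact Complex.continuous_normSq.comp (continuous_id.matrix_elem a b)

lemma entry_le_frobC {m : ℕ} (X : Matrix (Fin m) (Fin m) ℂ) (a b : Fin m) :
    ‖X a b‖ ≤ frobC X := by
  unfold frobC
  rw [Complex.norm_def]
  apply Real.sqrt_le_sqrt
  calc Complex.normSq (X a b) ≤ ∑ b, Complex.normSq (X a b) :=
        Finset.single_le_sum (f := fun b => Complex.normSq (X a b))
          (fun b _ => Complex.normSq_nonneg _) (Finset.mem_univ b)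
    _ ≤ _ := Finset.single_le_sum (f := fun a => ∑ b, Complex.normSq (X a b))
          (fun a _ => Finset.sum_nonneg fun b _ => Complex.normSq_nonneg _) (Finset.mem_univ a)

lemma sum_single_re {m : ℕ} (G : Matrix (Fin m) (Fin m) ℂ) (a b : Fin m) (z : ℂ) :
    (∑ i, ∑ j, ((starRingEnd ℂ) (G i j) * (Matrix.single a b z : Matrix _ _ ℂ) i j).re) =
      ((starRingEnd ℂ) (G a b) * z).re := by
  rw [Finset.sum_eq_single a, Finset.sum_eq_single b]
  · simp
  · intro j _ hj; simp [Matrix.single, hj.symm]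
  · simp
  · intro i _ hi; simp [Matrix.single, hi.symm]
  · simp

lemma continuous_grad {n : ℕ} (f : (Fin n → Fin n → ℂ) → ℝ) (hf : ContDiff ℝ 1 f)
    (g : Matrix (Fin n) (Fin n) ℂ → Matrix (Fin n) (Fin n) ℂ) (hg : IsGradC f g) :
    Continuous g := by
  have key : ∀ (U H : Matrix (Fin n) (Fin n) ℂ),
      (∑ i, ∑ j, ((starRingEnd ℂ) (g U i j) * H i j).re) = fderiv ℝ f U H := by
    intro U H
    refine (hg U H).unique ?_
    have hγ : HasDerivAt (fun τ : ℝ => (fun a b => U a b + τ • H a b : Fin n → Fin n → ℂ))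
        H 0 := by
      refine hasDerivAt_pi.2 fun a => hasDerivAt_pi.2 fun b => ?_
      have := ((hasDerivAt_id (0 : ℝ)).smul_const (H a b)).const_add (U a b)
      simpa using this
    have hfd : HasFDerivAt f (fderiv ℝ f U)
        (fun a b => U a b + (0 : ℝ) • H a b : Fin n → Fin n → ℂ) := by
      have : (fun a b => U a b + (0 : ℝ) • H a b : Fin n → Fin n → ℂ) = U := by
        ext a b; simp
      rw [this]; exact (hf.differentiable (by norm_num) _).hasFDerivAt
    exact hfd.comp_hasDerivAt (0 : ℝ) hγ
  refine continuous_pi fun a => continuous_pi fun b => ?_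
  have hform : ∀ U, g U a b = ((fderiv ℝ f U (Matrix.single a b 1 : Matrix _ _ ℂ) : ℝ) : ℂ) +
      ((fderiv ℝ f U (Matrix.single a b Complex.I : Matrix _ _ ℂ) : ℝ) : ℂ) * Complex.I := by
    intro U
    rw [← key, ← key, sum_single_re, sum_single_re]
    apply Complex.ext <;> simp
  simp only [hform]
  have hc := hf.continuous_fderiv (by norm_num)
  have h1 : ∀ H : Fin n → Fin n → ℂ, Continuous fun U => fderiv ℝ f U H :=
    fun H => hc.clm_apply continuous_const
  exact (Complex.continuous_ofReal.comp (h1 _)).add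
    ((Complex.continuous_ofReal.comp (h1 _)).mul continuous_const)

lemma dirD_combo {n : ℕ} (f : (Fin n → Fin n → ℂ) → ℝ) (i j : Fin n)
    (H K : Matrix (Fin 2) (Fin 2) ℂ) (x y : ℝ) (U : Fin n → Fin n → ℂ) :
    dirD f i j (x • H + y • K) U = x * dirD f i j H U + y * dirD f i j K U := by
  unfold dirD
  rw [← smul_eq_mul, ← smul_eq_mul, ← map_smul, ← map_smul, ← map_add]
  congr 1
  ext a b
  simp only [Pi.add_apply, Pi.smul_apply, Finset.smul_sum, ← Finset.sum_add_distrib]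
  refine Finset.sum_congr rfl fun c _ => ?_
  simp only [planeE]
  split_ifs <;> simp <;> ring

/-- Weak convergence of the Jacobi-G algorithm on U(n) for the ICA cost function
`f(U) = Σ_ℓ α_ℓ Σ_k |W^(ℓ)(U)_{k⋯k}|²`, where
`W^(ℓ)(U)_{k₁⋯k_{d_ℓ}} = Σ_a A^(ℓ)_a Π_{p<t_ℓ} conj(U_{a_p k_p}) Π_{p≥t_ℓ} U_{a_p k_p}`:
every accumulation point of the iterates is a stationary point of `f` on U(n). -/
theorem jacobiG_unitary_accumulation_stationary {n L : ℕ}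
    (d t : Fin L → ℕ) (htd : ∀ ℓ, t ℓ ≤ d ℓ) (hd : ∀ ℓ, 1 ≤ d ℓ)
    (α : Fin L → ℝ)
    (A : (ℓ : Fin L) → ((Fin (d ℓ) → Fin n) → ℂ))
    (f : Matrix (Fin n) (Fin n) ℂ → ℝ)
    (hf : ∀ U : Matrix (Fin n) (Fin n) ℂ, f U =
      ∑ ℓ, α ℓ * ∑ k : Fin n, Complex.normSq
        (∑ a : Fin (d ℓ) → Fin n, A ℓ a *
          ∏ p : Fin (d ℓ), (if (p : ℕ) < t ℓ then (starRingEnd ℂ) (U (a p) k)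
            else U (a p) k)))
    (g : Matrix (Fin n) (Fin n) ℂ → Matrix (Fin n) (Fin n) ℂ)
    (hg : IsGradC f g)
    (δ : ℝ) (hδ0 : 0 < δ) (hδn : δ < Real.sqrt 2 / (n : ℝ))
    (U : ℕ → Matrix (Fin n) (Fin n) ℂ) (hU0 : (U 0)ᴴ * U 0 = 1)
    (i j : ℕ → Fin n) (c s₁ s₂ : ℕ → ℝ)
    (hij : ∀ k, i k < j k)
    (hparam : ∀ k, (c k) ^ 2 + (s₁ k) ^ 2 + (s₂ k) ^ 2 = 1)
    (hupd : ∀ k, U (k + 1) = U k * planeG n (i k) (j k) (PsiM (c k) (s₁ k) (s₂ k)))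
    (hpair : ∀ k, ∃ gh : Matrix (Fin 2) (Fin 2) ℂ,
      (∀ H : Matrix (Fin 2) (Fin 2) ℂ,
        HasDerivAt (fun τ : ℝ => f (U k * planeG n (i k) (j k) (1 + τ • H)))
          (∑ a, ∑ b, ((starRingEnd ℂ) (gh a b) * H a b).re) 0) ∧
      δ * frobC (projGradC g (U k)) ≤ frobC ((1 / 2 : ℂ) • (gh - ghᴴ)))
    (hmax : ∀ k, ∀ c' s₁' s₂' : ℝ, c' ^ 2 + s₁' ^ 2 + s₂' ^ 2 = 1 →
      f (U k * planeG n (i k) (j k) (PsiM c' s₁' s₂')) ≤ f (U (k + 1)))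
    (Us : Matrix (Fin n) (Fin n) ℂ)
    (hacc : ∃ φ : ℕ → ℕ, StrictMono φ ∧
      Tendsto (fun m => frobC (U (φ m) - Us)) atTop (nhds 0)) :
    projGradC g Us = 0 := by
  classical
  have hC : ContDiff ℝ 1 (E := Fin n → Fin n → ℂ) f := contDiff_cost d t α A f hf
  have hfc : Continuous f := hC.continuous
  have hgc : Continuous g := continuous_grad f hC g hg
  -- the 2x2 gradients
  have hpair' : ∀ k, δ * frobC (projGradC g (U k)) ≤
      frobC ((1 / 2 : ℂ) • (gradH f (i k) (j k) (U k) - (gradH f (i k) (j k) (U k))ᴴ)) := by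
    intro k
    obtain ⟨gh, h1, h2⟩ := hpair k
    have key : ∀ H, (∑ a, ∑ b, ((starRingEnd ℂ) (gh a b) * H a b).re) =
        dirD f (i k) (j k) H (U k) := by
      intro H
      refine (h1 H).unique ?_
      refine hasDerivAt_plane f hC (i k) (j k) (hij k).ne (U k) _ H (by simp) ?_
      intro a b
      have := ((hasDerivAt_id (0 : ℝ)).smul_const (H a b)).const_add
        ((1 : Matrix (Fin 2) (Fin 2) ℂ) a b)
      simpa using this
    have : gh = gradH f (i k) (j k) (U k) := by
      ext a b
      unfold gradH
      rw [← key, ← key, sum_single_re, sum_single_re]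
      apply Complex.ext <;> simp
    rw [← this]; exact h2
  obtain ⟨φ, hφ, hlim⟩ := hacc
  -- pigeonhole
  have hpig : ∃ p : Fin n × Fin n, ∃ᶠ m in atTop, (i (φ m), j (φ m)) = p := by
    by_contra! hcon
    have : ∀ᶠ m in atTop, ∀ p : Fin n × Fin n, ¬ (i (φ m), j (φ m)) = p := by
      rw [eventually_all]
      intro p
      exact hcon p
    obtain ⟨m, hm⟩ := this.exists
    exact hm _ rfl
  obtain ⟨⟨i₀, j₀⟩, hp⟩ := hpig
  obtain ⟨ψ, hψ, hψp⟩ := extraction_of_frequently_atTop hp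
  have hi : ∀ m, i (φ (ψ m)) = i₀ := fun m => congrArg Prod.fst (hψp m)
  have hj : ∀ m, j (φ (ψ m)) = j₀ := fun m => congrArg Prod.snd (hψp m)
  have hne : i₀ ≠ j₀ := by
    have := (hij (φ (ψ 0))).ne
    rwa [hi, hj] at this
  have hUlim : Tendsto (fun m => U (φ (ψ m))) atTop (nhds Us) := by
    refine tendsto_pi_nhds.2 fun a => tendsto_pi_nhds.2 fun b => ?_
    rw [tendsto_iff_norm_sub_tendsto_zero]
    refine squeeze_zero (fun _ => norm_nonneg _) (fun m => ?_) (hlim.comp hψ.tendsto_atTop)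
    exact entry_le_frobC (U (φ (ψ m)) - Us) a b
  -- monotonicity
  have hmono : Monotone fun k => f (U k) := by
    refine monotone_nat_of_le_succ fun k => ?_
    have := hmax k 1 0 0 (by norm_num)
    have h1 : PsiM 1 0 0 = 1 := by
      ext a b; fin_cases a <;> fin_cases b <;> simp [PsiM]
    rwa [h1, planeG_one _ _ (hij k).ne, Matrix.mul_one] at this
  have hflim : Tendsto (fun m => f (U (φ (ψ m)))) atTop (nhds (f Us)) :=
    (hfc.tendsto Us).comp hUlim
  have hle : ∀ k, f (U k) ≤ f Us := by
    intro k
    refine ge_of_tendsto hflim ?_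
    filter_upwards [eventually_ge_atTop k] with m hm
    exact hmono (hm.trans ((hφ.comp hψ).le_apply))
  have hmaxs : ∀ x y z : ℝ, x ^ 2 + y ^ 2 + z ^ 2 = 1 →
      f (Us * planeG n i₀ j₀ (PsiM x y z)) ≤ f Us := by
    intro x y z hxyz
    have hcm : Continuous fun V : Matrix (Fin n) (Fin n) ℂ =>
        f (V * planeG n i₀ j₀ (PsiM x y z)) :=
      hfc.comp (continuous_id.matrix_mul continuous_const)
    refine le_of_tendsto ((hcm.tendsto Us).comp hUlim) (Eventually.of_forall fun m => ?_)
    have := hmax (φ (ψ m)) x y z hxyz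
    rw [hi, hj] at this
    exact this.trans (hle _)
  -- limit of the inequality
  have hpg : Continuous (projGradC g) := by
    unfold projGradC
    fun_prop
  have hlimineq : δ * frobC (projGradC g Us) ≤
      frobC ((1 / 2 : ℂ) • (gradH f i₀ j₀ Us - (gradH f i₀ j₀ Us)ᴴ)) := by
    have hGc : Continuous fun V : Matrix (Fin n) (Fin n) ℂ => gradH f i₀ j₀ V :=
      continuous_gradH f hC i₀ j₀
    have c1 : Continuous fun V : Matrix (Fin n) (Fin n) ℂ => δ * frobC (projGradC g V) :=
      continuous_const.mul (continuous_frobC.comp hpg)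
    have c2 : Continuous fun V : Matrix (Fin n) (Fin n) ℂ =>
        frobC ((1 / 2 : ℂ) • (gradH f i₀ j₀ V - (gradH f i₀ j₀ V)ᴴ)) :=
      continuous_frobC.comp (by fun_prop)
    refine le_of_tendsto_of_tendsto' ((c1.tendsto Us).comp hUlim) ((c2.tendsto Us).comp hUlim) ?_
    intro m
    have := hpair' (φ (ψ m))
    rw [hi, hj] at this
    exact this
  -- vanishing derivatives
  have hd1 : dirD f i₀ j₀ ((1 : ℝ) • Matrix.single 1 0 1 + (-1 : ℝ) • Matrix.single 0 1 1) Us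
      = 0 := by
    have hder := hasDerivAt_plane f hC i₀ j₀ hne Us
      (fun τ => PsiM (Real.cos τ) (Real.sin τ) 0)
      ((1 : ℝ) • Matrix.single 1 0 1 + (-1 : ℝ) • Matrix.single 0 1 1)
      (by ext a b; fin_cases a <;> fin_cases b <;> simp [PsiM])
      (by
        have hs := (Real.hasDerivAt_sin 0).ofReal_comp
        have hc := (Real.hasDerivAt_cos 0).ofReal_comp
        intro a b
        fin_cases a <;> fin_cases b
        · simpa [PsiM, Matrix.single] using hc
        · simpa [PsiM, Matrix.single] using hs.fun_neg
        · simpa [PsiM, Matrix.single] using hs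
        · simpa [PsiM, Matrix.single] using hc)
    refine IsLocalMax.hasDerivAt_eq_zero (Eventually.of_forall fun τ => ?_) hder
    have h0 : PsiM (Real.cos 0) (Real.sin 0) 0 = 1 := by
      ext a b; fin_cases a <;> fin_cases b <;> simp [PsiM]
    simp only [h0, planeG_one _ _ hne, Matrix.mul_one]
    exact hmaxs _ _ _ (by nlinarith [Real.sin_sq_add_cos_sq τ])
  have hd2 : dirD f i₀ j₀ ((-1 : ℝ) • Matrix.single 1 0 Complex.I
      + (-1 : ℝ) • Matrix.single 0 1 Complex.I) Us = 0 := by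
    have hder := hasDerivAt_plane f hC i₀ j₀ hne Us
      (fun τ => PsiM (Real.cos τ) 0 (Real.sin τ))
      ((-1 : ℝ) • Matrix.single 1 0 Complex.I + (-1 : ℝ) • Matrix.single 0 1 Complex.I)
      (by ext a b; fin_cases a <;> fin_cases b <;> simp [PsiM])
      (by
        have hs := ((Real.hasDerivAt_sin 0).ofReal_comp.mul_const Complex.I).fun_neg
        have hc := (Real.hasDerivAt_cos 0).ofReal_comp
        intro a b
        fin_cases a <;> fin_cases b
        · simpa [PsiM, Matrix.single] using hc
        · simpa [PsiM, Matrix.single] using hs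
        · simpa [PsiM, Matrix.single] using hs
        · simpa [PsiM, Matrix.single] using hc)
    refine IsLocalMax.hasDerivAt_eq_zero (Eventually.of_forall fun τ => ?_) hder
    have h0 : PsiM (Real.cos 0) 0 (Real.sin 0) = 1 := by
      ext a b; fin_cases a <;> fin_cases b <;> simp [PsiM]
    simp only [h0, planeG_one _ _ hne, Matrix.mul_one]
    exact hmaxs _ _ _ (by nlinarith [Real.sin_sq_add_cos_sq τ])
  have hexp : HasDerivAt (fun τ : ℝ => Complex.exp (τ * Complex.I)) Complex.I 0 := by
    have := ((hasDerivAt_id (0 : ℝ)).ofReal_comp.mul_const Complex.I).cexp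
    simpa using this
  have hnexp : ∀ τ : ℝ, Complex.normSq (Complex.exp (τ * Complex.I)) = 1 := by
    intro τ
    rw [Complex.normSq_eq_norm_sq, Complex.norm_exp_ofReal_mul_I]; norm_num
  have hd3 : dirD f i₀ j₀ (Matrix.single 0 0 Complex.I) Us = 0 := by
    have hder := hasDerivAt_plane f hC i₀ j₀ hne Us
      (fun τ => !![Complex.exp (τ * Complex.I), 0; 0, 1])
      (Matrix.single 0 0 Complex.I)
      (by ext a b; fin_cases a <;> fin_cases b <;> simp)
      (by
        intro a b
        fin_cases a <;> fin_cases b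
        · simpa [Matrix.single] using hexp
        all_goals simpa [Matrix.single] using hasDerivAt_const _ _)
    refine hder.unique ?_
    have : (fun τ : ℝ => f (Us * planeG n i₀ j₀ !![Complex.exp (τ * Complex.I), 0; 0, 1])) =
        fun _ => f Us := by
      funext τ
      rw [mul_planeG_diag _ _ hne]
      refine cost_phase d t α A f hf Us _ fun b => ?_
      split_ifs
      · exact hnexp τ
      · simp
      · simp
    rw [this]; exact hasDerivAt_const _ _
  have hd4 : dirD f i₀ j₀ (Matrix.single 1 1 Complex.I) Us = 0 := by
    have hder := hasDerivAt_plane f hC i₀ j₀ hne Us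
      (fun τ => !![1, 0; 0, Complex.exp (τ * Complex.I)])
      (Matrix.single 1 1 Complex.I)
      (by ext a b; fin_cases a <;> fin_cases b <;> simp)
      (by
        intro a b
        fin_cases a <;> fin_cases b
        · simpa [Matrix.single] using hasDerivAt_const _ _
        · simpa [Matrix.single] using hasDerivAt_const _ _
        · simpa [Matrix.single] using hasDerivAt_const _ _
        · simpa [Matrix.single] using hexp)
    refine hder.unique ?_
    have : (fun τ : ℝ => f (Us * planeG n i₀ j₀ !![1, 0; 0, Complex.exp (τ * Complex.I)])) =
        fun _ => f Us := by
      funext τ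
      rw [mul_planeG_diag _ _ hne]
      refine cost_phase d t α A f hf Us _ fun b => ?_
      split_ifs
      · simp
      · exact hnexp τ
      · simp
    rw [this]; exact hasDerivAt_const _ _
  replace hd1 := (dirD_combo f i₀ j₀ _ _ _ _ Us).symm.trans hd1
  replace hd2 := (dirD_combo f i₀ j₀ _ _ _ _ Us).symm.trans hd2
  have hzero : gradH f i₀ j₀ Us - (gradH f i₀ j₀ Us)ᴴ = 0 := by
    ext a b
    fin_cases a <;> fin_cases b <;> apply Complex.ext <;>
      simp [gradH, hd3, hd4] <;> linarith
  rw [hzero, smul_zero] at hlimineq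
  have hz : frobC (0 : Matrix (Fin 2) (Fin 2) ℂ) = 0 := by simp [frobC]
  rw [hz] at hlimineq
  ext a b
  have h1 := entry_le_frobC (projGradC g Us) a b
  have h2 : frobC (projGradC g Us) ≤ 0 := by
    by_contra! hcon
    nlinarith [mul_pos hδ0 hcon]
  simpa using h1.trans h2
end
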